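/- Let ŵ(x) = ω(x/|x|) be a nonconstant S¹-equivariant tangent map induced by a smooth S¹-equivariant harmonic sphere ω = (ω₀,ω₁,ω₂): S² → S⁴, and suppose the range of ŵ is not contained in the unit sphere of ℝ⊕ℂ⊕{0} (equivalently, ω₂ is not identically zero). Then ŵ is unstable: there exists an S¹-equivariant vector field X ∈ C_c^∞(ℝ³∖{0}; ℝ⊕ℂ⊕ℂ) such that δ²E₀(ŵ)[X] < 0. -/

import Mathlib

noncomputable section

open MeasureTheory
open scoped Classical

abbrev E3 : Type := EuclideanSpace ℝ (Fin 3)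

abbrev V5 : Type := ℝ × ℂ × ℂ

/-- Squared Euclidean norm on ℝ ⊕ ℂ ⊕ ℂ. -/
def nsq (p : V5) : ℝ := p.1 ^ 2 + Complex.normSq p.2.1 + Complex.normSq p.2.2

/-- Real inner product on ℝ ⊕ ℂ ⊕ ℂ. -/
def vdot (p q : V5) : ℝ :=
  p.1 * q.1 + (p.2.1 * (starRingEnd ℂ) q.2.1).re + (p.2.2 * (starRingEnd ℂ) q.2.2).re

/-- The circle action R_α · (t, ζ₁, ζ₂) = (t, e^{iα}ζ₁, e^{2iα}ζ₂) on ℝ ⊕ ℂ ⊕ ℂ. -/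
def circAct (α : ℝ) (p : V5) : V5 :=
  (p.1, Complex.exp (Complex.I * (α : ℂ)) * p.2.1,
    Complex.exp (2 * Complex.I * (α : ℂ)) * p.2.2)

/-- Rotation of ℝ³ by angle α about the x₃-axis. -/
def rot3 (α : ℝ) (x : E3) : E3 :=
  EuclideanSpace.single (0 : Fin 3) (Real.cos α * x 0 - Real.sin α * x 1) +
    EuclideanSpace.single (1 : Fin 3) (Real.sin α * x 0 + Real.cos α * x 1) +
    EuclideanSpace.single (2 : Fin 3) (x 2)

/-- The unit sphere S² ⊂ ℝ³. -/
def sphere2 : Set E3 := Metric.sphere (0 : E3) 1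

def northPole : E3 := EuclideanSpace.single (2 : Fin 3) (1 : ℝ)

def southPole : E3 := EuclideanSpace.single (2 : Fin 3) (-1 : ℝ)

/-- Degree-zero homogeneous extension of a map defined on the sphere. -/
def homExt (ω : E3 → V5) : E3 → V5 := fun x => ω (‖x‖⁻¹ • x)

def homExtR (g : E3 → ℝ) : E3 → ℝ := fun x => g (‖x‖⁻¹ • x)

/-- Squared Euclidean norm of the differential. -/
def gradSq (f : E3 → V5) (x : E3) : ℝ :=
  ∑ i : Fin 3, nsq (fderiv ℝ f x (EuclideanSpace.single i (1 : ℝ)))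

def gradSqR (f : E3 → ℝ) (x : E3) : ℝ :=
  ∑ i : Fin 3, fderiv ℝ f x (EuclideanSpace.single i (1 : ℝ)) ^ 2

/-- Componentwise Euclidean Laplacian. -/
def lap (f : E3 → V5) (x : E3) : V5 :=
  ∑ i : Fin 3,
    fderiv ℝ (fun y => fderiv ℝ f y (EuclideanSpace.single i (1 : ℝ))) x
      (EuclideanSpace.single i (1 : ℝ))

/-- ω : S² → S⁴ is a (smooth) harmonic sphere: it maps the sphere into the unit
sphere of ℝ ⊕ ℂ ⊕ ℂ, its degree-zero homogeneous extension Q is smooth away from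
the origin, and ΔQ + |∇Q|²Q = 0 on ℝ³ ∖ {0}. -/
def IsHarmonicSphere (ω : E3 → V5) : Prop :=
  (∀ x ∈ sphere2, nsq (ω x) = 1) ∧
    ContDiffOn ℝ (⊤ : ℕ∞) (homExt ω) {(0 : E3)}ᶜ ∧
    ∀ x : E3, x ≠ 0 → lap (homExt ω) x + gradSq (homExt ω) x • homExt ω x = 0

/-- S¹-equivariance of a sphere map. -/
def EquivariantS (ω : E3 → V5) : Prop :=
  ∀ α : ℝ, ∀ x ∈ sphere2, ω (rot3 α x) = circAct α (ω x)

/-- S¹-equivariance of a vector field on ℝ³. -/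
def EquivariantV (X : E3 → V5) : Prop :=
  ∀ (α : ℝ) (x : E3), X (rot3 α x) = circAct α (X x)

/-- Tangential part X_T = X - (w·X)w. -/
def tangPart (w X : E3 → V5) : E3 → V5 := fun x => X x - vdot (w x) (X x) • w x

/-- Second variation δ²E₀(w)[X] = ∫ (|∇X_T|² - |∇w|²|X_T|²). -/
def secondVar (w X : E3 → V5) : ℝ :=
  ∫ x : E3, (gradSq (tangPart w X) x - gradSq w x * nsq (tangPart w X x))

/-- Stability of a tangent map within the S¹-equivariant class. -/
def IsStable (w : E3 → V5) : Prop :=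
  ∀ X : E3 → V5, ContDiff ℝ (⊤ : ℕ∞) X → HasCompactSupport X → EquivariantV X →
    0 ≤ secondVar w X

def conj' (z : ℂ) : ℂ := (starRingEnd ℂ) z

/-- The twistor fibration, in homogeneous coordinates on ℂ⁴ ∖ {0}. -/
def tau4 (w0 w1 w2 w3 : ℂ) : V5 :=
  ((Complex.normSq w0 + Complex.normSq w3 - Complex.normSq w1 - Complex.normSq w2) /
      (Complex.normSq w0 + Complex.normSq w1 + Complex.normSq w2 + Complex.normSq w3),
    2 * (conj' w0 * w1 + conj' w2 * w3) /
      ((Complex.normSq w0 + Complex.normSq w1 + Complex.normSq w2 + Complex.normSq w3 : ℝ) : ℂ),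
    2 * (conj' w0 * w2 - conj' w1 * w3) /
      ((Complex.normSq w0 + Complex.normSq w1 + Complex.normSq w2 + Complex.normSq w3 : ℝ) : ℂ))

/-- Inverse stereographic projection ℂ → S² (from the south pole). -/
def stInv (z : ℂ) : E3 :=
  EuclideanSpace.single (0 : Fin 3) (2 * z.re / (1 + Complex.normSq z)) +
    EuclideanSpace.single (1 : Fin 3) (2 * z.im / (1 + Complex.normSq z)) +
    EuclideanSpace.single (2 : Fin 3) ((1 - Complex.normSq z) / (1 + Complex.normSq z))

/-- Equatorial embedding ω_eq^{(1)}(x) = (x₃, x₁ + ix₂, 0). -/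
def omegaEq1 (x : E3) : V5 := (x 2, (x 0 : ℂ) + (x 1 : ℂ) * Complex.I, 0)

/-- Equatorial embedding ω_eq^{(2)}(x) = (x₃, 0, x₁ + ix₂). -/
def omegaEq2 (x : E3) : V5 := (x 2, 0, (x 0 : ℂ) + (x 1 : ℂ) * Complex.I)

/-- The horizontal algebraic curve composed with the twistor fibration. -/
def liftCurve (μ1 μ2 z0 z1 : ℂ) : V5 :=
  tau4 (z0 ^ 3) (μ1 * z0 ^ 2 * z1) (μ2 * z0 * z1 ^ 2) (-(μ1 * μ2 / 3) * z1 ^ 3)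

/-- The explicit two-parameter family ω_{μ₁,μ₂} of equivariant harmonic spheres,
as a map defined on S² via the identification [z₀, z₁] ↦ σ₂⁻¹(z₁/z₀). -/
def omegaFam (μ1 μ2 : ℂ) (x : E3) : V5 :=
  if x = southPole then
    if μ1 = 0 ∧ μ2 = 0 then ((1 : ℝ), 0, 0)
    else if μ1 ≠ 0 ∧ μ2 ≠ 0 then liftCurve μ1 μ2 0 1
    else ((-1 : ℝ), 0, 0)
  else liftCurve μ1 μ2 ((1 + x 2 : ℝ) : ℂ) ((x 0 : ℂ) + (x 1 : ℂ) * Complex.I)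

/-- Wirtinger derivative ∂f/∂z̄ = ½(∂_{x₁} + i ∂_{x₂})f. -/
def wd (f : ℂ → ℂ) (z : ℂ) : ℂ :=
  (1 / 2 : ℂ) * (fderiv ℝ f z 1 + Complex.I * fderiv ℝ f z Complex.I)

/-- Surface (2-dimensional Hausdorff) measure on ℝ³. -/
def surf : Measure E3 := Measure.hausdorffMeasure 2

section Helpers

open Filter Topology ContDiff

section
/-- Partial derivative of a complex-valued function. -/
def pd (i : Fin 3) (F : E3 → ℂ) (x : E3) : ℂ := fderiv ℝ F x (EuclideanSpace.single i (1 : ℝ))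

/-- Smooth away from the origin. -/
def SmoothOff (F : E3 → ℂ) : Prop := ∀ x : E3, x ≠ 0 → ContDiffAt ℝ ∞ F x

lemma SmoothOff.diff {F : E3 → ℂ} (h : SmoothOff F) {x : E3} (hx : x ≠ 0) :
    DifferentiableAt ℝ F x := (h x hx).differentiableAt (by simp)

lemma SmoothOff.mul {F G : E3 → ℂ} (hF : SmoothOff F) (hG : SmoothOff G) :
    SmoothOff (fun y => F y * G y) := fun x hx => (hF x hx).mul (hG x hx)

lemma SmoothOff.add {F G : E3 → ℂ} (hF : SmoothOff F) (hG : SmoothOff G) :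
    SmoothOff (fun y => F y + G y) := fun x hx => (hF x hx).add (hG x hx)

lemma SmoothOff.conj {F : E3 → ℂ} (hF : SmoothOff F) :
    SmoothOff (fun y => (starRingEnd ℂ) (F y)) := fun x hx =>
  (Complex.conjCLE.contDiff.contDiffAt).comp x (hF x hx)

lemma contDiffAt_pd {F : E3 → ℂ} {x : E3} (h : ContDiffAt ℝ ∞ F x) (i : Fin 3) :
    ContDiffAt ℝ ∞ (pd i F) x := by
  have h1 : ContDiffAt ℝ ∞ (fderiv ℝ F) x := h.fderiv_right (m := ∞) (by simp)
  exact h1.clm_apply contDiffAt_const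

lemma SmoothOff.pd {F : E3 → ℂ} (hF : SmoothOff F) (i : Fin 3) : SmoothOff (pd i F) :=
  fun x hx => contDiffAt_pd (hF x hx) i

lemma pd_mul {F G : E3 → ℂ} {x : E3} (i : Fin 3) (hF : DifferentiableAt ℝ F x)
    (hG : DifferentiableAt ℝ G x) :
    pd i (fun y => F y * G y) x = pd i F x * G x + F x * pd i G x := by
  unfold pd
  rw [fderiv_fun_mul hF hG]
  simp [smul_eq_mul]; ring

lemma pd_add {F G : E3 → ℂ} {x : E3} (i : Fin 3) (hF : DifferentiableAt ℝ F x)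
    (hG : DifferentiableAt ℝ G x) :
    pd i (fun y => F y + G y) x = pd i F x + pd i G x := by
  unfold pd
  rw [fderiv_fun_add hF hG]; simp

lemma pd_sub {F G : E3 → ℂ} {x : E3} (i : Fin 3) (hF : DifferentiableAt ℝ F x)
    (hG : DifferentiableAt ℝ G x) :
    pd i (fun y => F y - G y) x = pd i F x - pd i G x := by
  unfold pd
  rw [fderiv_fun_sub hF hG]; simp

lemma pd_const_mul {F : E3 → ℂ} {x : E3} (c : ℂ) (i : Fin 3) (hF : DifferentiableAt ℝ F x) :
    pd i (fun y => c * F y) x = c * pd i F x := by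
  unfold pd
  rw [fderiv_const_mul hF]; simp

lemma pd_conj {F : E3 → ℂ} {x : E3} (i : Fin 3) :
    pd i (fun y => (starRingEnd ℂ) (F y)) x = (starRingEnd ℂ) (pd i F x) := by
  unfold pd
  have := Complex.conjCLE.comp_fderiv (f := F) (x := x)
  have e : (fun y => (starRingEnd ℂ) (F y)) = Complex.conjCLE ∘ F := by ext; simp
  rw [e, this]; simp

lemma pd_congr {F G : E3 → ℂ} {x : E3} (i : Fin 3) (h : F =ᶠ[𝓝 x] G) : pd i F x = pd i G x := by
  unfold pd; rw [h.fderiv_eq]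

lemma pd_congr_off {F G : E3 → ℂ} {x : E3} (i : Fin 3) (hx : x ≠ 0)
    (h : ∀ y, y ≠ 0 → F y = G y) : pd i F x = pd i G x := by
  apply pd_congr
  filter_upwards [isOpen_ne.mem_nhds hx] with y hy using h y hy

/-- coordinate as complex-valued function -/
def cx (j : Fin 3) (y : E3) : ℂ := ((y j : ℝ) : ℂ)

lemma cx_contDiff (j : Fin 3) : ContDiff ℝ ∞ (cx j) := by
  have : cx j = fun y => (Complex.ofRealCLM.comp (EuclideanSpace.proj (𝕜 := ℝ) j)) y := by
    ext y; simp [cx]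
  rw [this]; exact ContinuousLinearMap.contDiff _

lemma cx_off (j : Fin 3) : SmoothOff (cx j) := fun _ _ => (cx_contDiff j).contDiffAt

lemma pd_cx (i j : Fin 3) (x : E3) : pd i (cx j) x = if i = j then 1 else 0 := by
  have : cx j = fun y => (Complex.ofRealCLM.comp (EuclideanSpace.proj (𝕜 := ℝ) j)) y := by
    ext y; simp [cx]
  unfold pd
  rw [this, ContinuousLinearMap.fderiv]
  by_cases h : i = j
  · subst h; simp
  · simp [h, Ne.symm h]

lemma pd_comm {F : E3 → ℂ} {x : E3} (h : ContDiffAt ℝ ∞ F x) (i j : Fin 3) :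
    pd i (pd j F) x = pd j (pd i F) x := by
  have h1 : DifferentiableAt ℝ (fderiv ℝ F) x :=
    (h.fderiv_right (m := ∞) (by simp)).differentiableAt (by simp)
  have hs : IsSymmSndFDerivAt ℝ F x := h.isSymmSndFDerivAt (by simp; exact WithTop.coe_le_coe.2 (le_top : (2 : ℕ∞) ≤ ⊤))
  have key : ∀ i j : Fin 3, pd i (pd j F) x = fderiv ℝ (fderiv ℝ F) x
      (EuclideanSpace.single i 1) (EuclideanSpace.single j 1) := by
    intro i j
    unfold pd
    rw [fderiv_clm_apply h1 (by fun_prop)]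
    simp
  rw [key, key]; exact hs _ _

lemma fderiv_eq_sum (F : E3 → ℂ) (x v : E3) :
    fderiv ℝ F x v = (v 0 : ℂ) * pd 0 F x + (v 1 : ℂ) * pd 1 F x + (v 2 : ℂ) * pd 2 F x := by
  have : v = v 0 • EuclideanSpace.single (0 : Fin 3) (1 : ℝ) +
      v 1 • EuclideanSpace.single (1 : Fin 3) (1 : ℝ) +
      v 2 • EuclideanSpace.single (2 : Fin 3) (1 : ℝ) := by
    ext i; fin_cases i <;> simp
  conv_lhs => rw [this]
  simp [pd, map_add]

/-- Homogeneous, equivariant eigenfunction data. -/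
structure Wt (m : ℕ) (F : E3 → ℂ) (e : E3 → ℝ) : Prop where
  sm : SmoothOff F
  hom : ∀ (c : ℝ) (x : E3), 0 < c → x ≠ 0 → F (c • x) = F x
  eqv : ∀ (α : ℝ) (x : E3), x ≠ 0 → F (rot3 α x) = Complex.exp (m * Complex.I * α) * F x
  lapl : ∀ x : E3, x ≠ 0 → pd 0 (pd 0 F) x + pd 1 (pd 1 F) x + pd 2 (pd 2 F) x = -(e x) * F x

variable {m : ℕ} {F : E3 → ℂ} {e : E3 → ℝ}

lemma Wt.euler (h : Wt m F e) {x : E3} (hx : x ≠ 0) :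
    cx 0 x * pd 0 F x + cx 1 x * pd 1 F x + cx 2 x * pd 2 F x = 0 := by
  have h1 : HasDerivAt (fun c : ℝ => F (c • x)) (fderiv ℝ F x x) 1 := by
    have hd : HasFDerivAt F (fderiv ℝ F x) ((1 : ℝ) • x) := by
      rw [one_smul]; exact (h.sm.diff hx).hasFDerivAt
    have hc : HasDerivAt (fun c : ℝ => c • x) ((1 : ℝ) • x) 1 := (hasDerivAt_id _).smul_const x
    have := hd.comp_hasDerivAt (1 : ℝ) hc
    rw [one_smul] at this; exact this
  have h2 : (fun c : ℝ => F (c • x)) =ᶠ[𝓝 1] fun _ => F x := by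
    filter_upwards [lt_mem_nhds (zero_lt_one)] with c hc using h.hom c x hc hx
  have h3 := h1.congr_of_eventuallyEq h2.symm
  have h4 := h3.unique (hasDerivAt_const _ _)
  rw [fderiv_eq_sum] at h4
  exact h4

lemma Wt.rotd (h : Wt m F e) {x : E3} (hx : x ≠ 0) :
    cx 0 x * pd 1 F x - cx 1 x * pd 0 F x = m * Complex.I * F x := by
  have hr0 : rot3 0 x = x := by ext i; fin_cases i <;> simp [rot3]
  let v : E3 := EuclideanSpace.single (0 : Fin 3) (- x 1) + EuclideanSpace.single (1 : Fin 3) (x 0)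
  have hr : HasDerivAt (fun α : ℝ => rot3 α x) v 0 := by
    unfold rot3
    have hs := Real.hasDerivAt_sin 0
    have hc := Real.hasDerivAt_cos 0
    have key : ∀ (i : Fin 3) (f : ℝ → ℝ) (f' : ℝ), HasDerivAt f f' 0 →
        HasDerivAt (fun α => (EuclideanSpace.single i (f α) : E3)) (EuclideanSpace.single i f') 0 := by
      intro i f f' hf
      have e1 : ∀ r : ℝ, (EuclideanSpace.single i r : E3) = r • EuclideanSpace.single i (1 : ℝ) := by
        intro r; ext j; simp
      simp_rw [e1 (f _), e1 f']
      exact hf.smul_const _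
    have a := key 0 _ _ ((hc.mul_const (x 0)).sub (hs.mul_const (x 1)))
    have b := key 1 _ _ ((hs.mul_const (x 0)).add (hc.mul_const (x 1)))
    have c := key 2 _ _ (hasDerivAt_const (0 : ℝ) (x 2))
    have := (a.add b).add c
    refine this.congr_deriv ?_
    ext i; fin_cases i <;> simp [v]
  have h1 : HasDerivAt (fun α : ℝ => F (rot3 α x)) (fderiv ℝ F x v) 0 := by
    have hd : HasFDerivAt F (fderiv ℝ F x) (rot3 0 x) := by
      rw [hr0]; exact (h.sm.diff hx).hasFDerivAt
    exact hd.comp_hasDerivAt (0 : ℝ) hr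
  have h2 : HasDerivAt (fun α : ℝ => F (rot3 α x)) (m * Complex.I * F x) 0 := by
    simp_rw [fun α => h.eqv α x hx]
    have a : HasDerivAt (fun α : ℝ => (α : ℂ)) 1 0 := Complex.ofRealCLM.hasDerivAt
    have b := ((a.const_mul (m * Complex.I)).cexp).mul_const (F x)
    refine b.congr_deriv ?_
    simp
  have h4 := h1.unique h2
  rw [fderiv_eq_sum] at h4
  rw [← h4]
  simp [v, cx]; ring

end

section
variable {m : ℕ} {F : E3 → ℂ} {e : E3 → ℝ}

lemma pd_zero_fun (i : Fin 3) (x : E3) : pd i (fun _ => (0 : ℂ)) x = 0 := by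
  simp [pd]

/-- The line `(1, 0, y)`. -/
def gam (y : ℝ) : E3 := EuclideanSpace.single (0 : Fin 3) (1 : ℝ) +
  y • EuclideanSpace.single (2 : Fin 3) (1 : ℝ)

lemma gam0 (y : ℝ) : gam y 0 = 1 := by simp [gam]
lemma gam1 (y : ℝ) : gam y 1 = 0 := by simp [gam]
lemma gam2 (y : ℝ) : gam y 2 = y := by simp [gam]

lemma gam_ne (y : ℝ) : gam y ≠ 0 := by
  intro h
  have := gam0 y
  rw [h] at this; simp at this

lemma gam_cont : Continuous gam := by unfold gam; fun_prop

lemma gam_deriv {G : E3 → ℂ} (hG : SmoothOff G) (y : ℝ) :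
    HasDerivAt (fun y => G (gam y)) (pd 2 G (gam y)) y := by
  have hd : HasFDerivAt G (fderiv ℝ G (gam y)) (gam y) := (hG.diff (gam_ne y)).hasFDerivAt
  have hc : HasDerivAt gam ((1 : ℝ) • EuclideanSpace.single (2 : Fin 3) (1 : ℝ)) y :=
    ((hasDerivAt_id _).smul_const _).const_add _
  rw [one_smul] at hc
  exact hd.comp_hasDerivAt y hc

lemma Wt.euler_d (h : Wt m F e) {x : E3} (hx : x ≠ 0) (i : Fin 3) :
    pd i F x + cx 0 x * pd i (pd 0 F) x + cx 1 x * pd i (pd 1 F) x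
      + cx 2 x * pd i (pd 2 F) x = 0 := by
  have h1 := pd_congr_off (F := fun x => cx 0 x * pd 0 F x + cx 1 x * pd 1 F x + cx 2 x * pd 2 F x)
    (G := fun _ => 0) i hx (fun y hy => h.euler hy)
  have d := fun j => (cx_off j).diff hx
  have f := fun j => (h.sm.pd j).diff hx
  have df := fun j => ((cx_off j).mul (h.sm.pd j)).diff hx
  rw [pd_add i (((((cx_off 0).mul (h.sm.pd 0)).add ((cx_off 1).mul (h.sm.pd 1)))).diff hx) (df 2),
    pd_add i (df 0) (df 1), pd_mul i (d 0) (f 0), pd_mul i (d 1) (f 1), pd_mul i (d 2) (f 2),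
    pd_zero_fun, pd_cx, pd_cx, pd_cx] at h1
  rw [← h1]
  fin_cases i <;> simp <;> ring

lemma Wt.rot_d1 (h : Wt m F e) {x : E3} (hx : x ≠ 0) :
    cx 0 x * pd 1 (pd 1 F) x - pd 0 F x - cx 1 x * pd 1 (pd 0 F) x
      = m * Complex.I * pd 1 F x := by
  have h1 := pd_congr_off (F := fun x => cx 0 x * pd 1 F x - cx 1 x * pd 0 F x)
    (G := fun x => m * Complex.I * F x) 1 hx (fun y hy => h.rotd hy)
  have d := fun j => (cx_off j).diff hx
  have f := fun j => (h.sm.pd j).diff hx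
  have df := fun j k => ((cx_off j).mul (h.sm.pd k)).diff hx
  rw [pd_sub 1 (df 0 1) (df 1 0), pd_mul 1 (d 0) (f 1), pd_mul 1 (d 1) (f 0),
    pd_const_mul _ 1 (h.sm.diff hx), pd_cx, pd_cx] at h1
  rw [← h1]
  simp; ring

lemma Wt.ode (h : Wt m F e) (y : ℝ) :
    (1 + (y : ℂ) ^ 2) * pd 2 (pd 2 F) (gam y) + y * pd 2 F (gam y)
      = ((m : ℂ) ^ 2 - e (gam y)) * F (gam y) := by
  have hx := gam_ne y
  have a0 := h.euler_d hx 0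
  have a2 := h.euler_d hx 2
  have b := h.rot_d1 hx
  have l := h.lapl _ hx
  have eu := h.euler hx
  have ro := h.rotd hx
  have s := pd_comm (h.sm _ hx) 0 2
  simp only [cx, gam0, gam1, gam2] at *
  push_cast at *
  simp only [one_mul, zero_mul, add_zero, sub_zero] at *
  have I2 : Complex.I * Complex.I = -1 := Complex.I_mul_I
  rw [s] at a0
  linear_combination l - a0 + (y : ℂ) * a2 - b - m * Complex.I * ro - m ^ 2 * F (gam y) * I2

lemma rot3_pole (α : ℝ) : rot3 α (EuclideanSpace.single (2 : Fin 3) (1 : ℝ)) =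
    EuclideanSpace.single (2 : Fin 3) (1 : ℝ) := by
  ext i; fin_cases i <;> simp [rot3]

lemma pole_ne : (EuclideanSpace.single (2 : Fin 3) (1 : ℝ) : E3) ≠ 0 := by
  simp

lemma Wt.pole (h : Wt m F e) (hm : m ≠ 0) : F (EuclideanSpace.single (2 : Fin 3) (1 : ℝ)) = 0 := by
  have h1 := h.eqv (Real.pi / m) _ pole_ne
  rw [rot3_pole] at h1
  have : (m : ℂ) * Complex.I * ((Real.pi / m : ℝ) : ℂ) = Real.pi * Complex.I := by
    have : (m : ℂ) ≠ 0 := by exact_mod_cast hm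
    push_cast; field_simp
  rw [this, Complex.exp_pi_mul_I] at h1
  linear_combination h1 / 2

lemma Wt.pd_hom (h : Wt m F e) (i : Fin 3) {c : ℝ} (hc : 0 < c) {x : E3} (hx : x ≠ 0) :
    (c : ℂ) * pd i F (c • x) = pd i F x := by
  have h1 := pd_congr_off (F := fun x => F (c • x)) (G := F) i hx (fun y hy => h.hom c y hc hy)
  rw [← h1]
  unfold pd
  rw [fderiv_comp_smul]
  simp

lemma Wt.wronsk (h : Wt m F e) (hm : m ≠ 0) (y : ℝ) :
    ((starRingEnd ℂ) (F (gam y)) * pd 2 F (gam y)).im = 0 := by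
  let J : ℝ → ℝ := fun y => Real.sqrt (1 + y ^ 2) *
    ((starRingEnd ℂ) (F (gam y)) * pd 2 F (gam y)).im
  have hJ : ∀ y, HasDerivAt J 0 y := by
    intro y
    have d1 : HasDerivAt (fun y => ((starRingEnd ℂ) (F (gam y)) * pd 2 F (gam y)).im)
        ((starRingEnd ℂ) (F (gam y)) * pd 2 (pd 2 F) (gam y)).im y := by
      have a := gam_deriv h.sm y
      have b := gam_deriv (h.sm.pd 2) y
      have a' := gam_deriv h.sm.conj y
      rw [pd_conj] at a'
      have := Complex.imCLM.hasFDerivAt.comp_hasDerivAt y (a'.mul b)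
      refine this.congr_deriv ?_
      simp; ring
    have p : (0:ℝ) < 1 + y ^ 2 := by positivity
    have d2 : HasDerivAt (fun y : ℝ => Real.sqrt (1 + y ^ 2)) (y / Real.sqrt (1 + y ^ 2)) y := by
      have := (((hasDerivAt_id y).pow 2).const_add 1).sqrt (by simpa using p.ne')
      refine this.congr_deriv ?_
      simp; field_simp
    refine (d2.mul d1).congr_deriv ?_
    have hs : Real.sqrt (1 + y ^ 2) ≠ 0 := (Real.sqrt_pos.2 p).ne'
    have hs2 : Real.sqrt (1 + y ^ 2) ^ 2 = 1 + y ^ 2 := Real.sq_sqrt p.le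
    have o := h.ode y
    have o2 : ((1 + y ^ 2 : ℝ) : ℂ) * ((starRingEnd ℂ) (F (gam y)) * pd 2 (pd 2 F) (gam y))
       + (y : ℂ) * ((starRingEnd ℂ) (F (gam y)) * pd 2 F (gam y)) =
       (((m : ℝ) ^ 2 - e (gam y) : ℝ) : ℂ) * ((starRingEnd ℂ) (F (gam y)) * F (gam y)) := by
      push_cast
      linear_combination (starRingEnd ℂ) (F (gam y)) * o
    rw [mul_comm _ (F (gam y)), Complex.mul_conj] at o2
    have o3 := congrArg Complex.im o2
    rw [Complex.add_im, Complex.im_ofReal_mul, Complex.im_ofReal_mul, Complex.im_ofReal_mul,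
      Complex.ofReal_im] at o3
    field_simp
    rw [hs2]
    simp only [mul_zero] at o3 ⊢
    linear_combination o3
  have hconst : ∀ y, J y = J 0 := fun y =>
    is_const_of_deriv_eq_zero (fun y => (hJ y).differentiableAt) (fun y => (hJ y).deriv) y 0
  -- limit at infinity
  let n : E3 := EuclideanSpace.single (2 : Fin 3) (1 : ℝ)
  let del : ℝ → E3 := fun t => t • EuclideanSpace.single (0 : Fin 3) (1 : ℝ) + n
  have hdel : Tendsto (fun y : ℝ => del y⁻¹) atTop (𝓝 n) := by
    have hc : Continuous del := by fun_prop
    have := (hc.tendsto 0).comp tendsto_inv_atTop_zero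
    simpa [del, Function.comp_def] using this
  have hF : Tendsto (fun y : ℝ => F (del y⁻¹)) atTop (𝓝 0) := by
    have := ((h.sm n pole_ne).continuousAt.tendsto).comp hdel
    rw [h.pole hm] at this
    exact this
  have hdF : Tendsto (fun y : ℝ => pd 2 F (del y⁻¹)) atTop (𝓝 (pd 2 F n)) :=
    ((h.sm.pd 2 n pole_ne).continuousAt.tendsto).comp hdel
  have hs : Tendsto (fun y : ℝ => Real.sqrt (1 + (y⁻¹) ^ 2)) atTop (𝓝 1) := by
    have hc : Continuous (fun t : ℝ => Real.sqrt (1 + t ^ 2)) := by fun_prop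
    have := (hc.tendsto 0).comp tendsto_inv_atTop_zero
    simpa [Function.comp_def] using this
  have hJlim : Tendsto J atTop (𝓝 0) := by
    have h1 : Tendsto (fun y : ℝ => Real.sqrt (1 + (y⁻¹) ^ 2) *
        ((starRingEnd ℂ) (F (del y⁻¹)) * pd 2 F (del y⁻¹)).im) atTop
        (𝓝 (1 * ((starRingEnd ℂ) 0 * pd 2 F n).im)) := by
      refine hs.mul ?_
      refine (Complex.continuous_im.tendsto _).comp (Tendsto.mul ?_ hdF)
      exact (Complex.continuous_conj.tendsto _).comp hF
    simp only [map_zero, zero_mul, Complex.zero_im, mul_zero] at h1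
    refine h1.congr' ?_
    filter_upwards [eventually_gt_atTop 0] with y hy
    have hg : y • del y⁻¹ = gam y := by
      ext i; fin_cases i <;> simp [del, n, gam, hy.ne']
    have hne : del y⁻¹ ≠ 0 := by
      intro h0; rw [h0, smul_zero] at hg; exact gam_ne y hg.symm
    have e1 : F (gam y) = F (del y⁻¹) := by rw [← hg]; exact h.hom y _ hy hne
    have e2 : pd 2 F (del y⁻¹) = y * pd 2 F (gam y) := by
      rw [← hg]; exact (h.pd_hom 2 hy hne).symm
    have e3 : Real.sqrt (1 + y ^ 2) = y * Real.sqrt (1 + (y⁻¹) ^ 2) := by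
      rw [show 1 + y ^ 2 = y ^ 2 * (1 + (y⁻¹) ^ 2) by field_simp; ring,
        Real.sqrt_mul (by positivity), Real.sqrt_sq hy.le]
    simp only [J]
    rw [e2, e1, e3, mul_left_comm, Complex.im_ofReal_mul]
    ring
  have hJ0 : J 0 = 0 := by
    refine tendsto_nhds_unique ?_ hJlim
    rw [show J = fun _ => J 0 from funext hconst]
    exact tendsto_const_nhds
  have := hconst y
  rw [hJ0] at this
  rcases mul_eq_zero.1 this with h' | h'
  · exact absurd h' (Real.sqrt_pos.2 (by positivity)).ne'
  · exact h'

end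

section
variable {m : ℕ} {F : E3 → ℂ} {e : E3 → ℝ}

lemma ode_zero (A B a b : ℝ → ℝ) (hA : Continuous A) (hB : Continuous B)
    (ha : ∀ t, HasDerivAt a (b t) t) (hb : ∀ t, HasDerivAt b (A t * a t + B t * b t) t)
    (a0 : a 0 = 0) (b0 : b 0 = 0) (t : ℝ) : a t = 0 := by
  let n : ℝ := |t| + 1
  obtain ⟨CA, hCA⟩ := (isCompact_Icc (a := -n) (b := n)).exists_bound_of_continuousOn hA.continuousOn
  obtain ⟨CB, hCB⟩ := (isCompact_Icc (a := -n) (b := n)).exists_bound_of_continuousOn hB.continuousOn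
  let K : NNReal := Real.toNNReal (1 + |CA| + |CB|)
  have hK : (K : ℝ) = 1 + |CA| + |CB| := Real.coe_toNNReal _ (by positivity)
  let v : ℝ → ℝ × ℝ → ℝ × ℝ := fun t p => (p.2, A t * p.1 + B t * p.2)
  have hv : ∀ t ∈ Set.Ioo (-n) n, LipschitzOnWith K (v t) Set.univ := by
    intro t ht
    have ht' := Set.Ioo_subset_Icc_self ht
    have h1 : |A t| ≤ |CA| := (hCA t ht').trans (le_abs_self _)
    have h2 : |B t| ≤ |CB| := (hCB t ht').trans (le_abs_self _)
    refine LipschitzOnWith.of_dist_le_mul fun p _ q _ => ?_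
    rw [hK, Prod.dist_eq, max_le_iff]
    have d1 : |p.1 - q.1| ≤ dist p q := by rw [← Real.dist_eq, Prod.dist_eq]; exact le_max_left _ _
    have d2 : |p.2 - q.2| ≤ dist p q := by rw [← Real.dist_eq, Prod.dist_eq]; exact le_max_right _ _
    have d0 : 0 ≤ dist p q := dist_nonneg
    constructor
    · simp only [v, Real.dist_eq]
      nlinarith [abs_nonneg CA, abs_nonneg CB, mul_nonneg (abs_nonneg CA) d0,
        mul_nonneg (abs_nonneg CB) d0]
    · simp only [v, Real.dist_eq]
      have : A t * p.1 + B t * p.2 - (A t * q.1 + B t * q.2) =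
        A t * (p.1 - q.1) + B t * (p.2 - q.2) := by ring
      rw [this]
      refine (abs_add_le _ _).trans ?_
      rw [abs_mul, abs_mul]
      have := mul_le_mul h1 d1 (abs_nonneg _) (abs_nonneg _)
      have := mul_le_mul h2 d2 (abs_nonneg _) (abs_nonneg _)
      nlinarith
  have hn : 0 < n := by positivity
  have := ODE_solution_unique_of_mem_Ioo (v := v) (s := fun _ => Set.univ) (K := K) (t₀ := 0)
    (f := fun t => (a t, b t)) (g := fun _ => (0, 0)) hv ⟨by linarith, hn⟩
    (fun t _ => ⟨(ha t).prodMk (hb t), trivial⟩)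
    (fun t _ => ⟨(hasDerivAt_const t ((0 : ℝ), (0 : ℝ))).congr_deriv (by simp [v]; rfl), trivial⟩)
    (by simp [a0, b0])
  have ht : t ∈ Set.Ioo (-n) n := by
    exact abs_lt.1 (lt_add_one _)
  exact congrArg Prod.fst (this ht)

lemma exists_kappa (v w : ℂ) (h : ((starRingEnd ℂ) v * w).im = 0) :
    ∃ k : ℂ, k ≠ 0 ∧ (k * v).im = 0 ∧ (k * w).im = 0 := by
  by_cases hv : v = 0
  · by_cases hw : w = 0
    · exact ⟨1, one_ne_zero, by simp [hv], by simp [hw]⟩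
    · refine ⟨(starRingEnd ℂ) w, by simpa using hw, by simp [hv], ?_⟩
      rw [mul_comm, Complex.mul_conj]; simp
  · refine ⟨(starRingEnd ℂ) v, by simpa using hv, ?_, h⟩
    rw [mul_comm, Complex.mul_conj]; simp

/-- The horizontal complex coordinate. -/
def zc (x : E3) : ℂ := ⟨x 0, x 1⟩

lemma zc_eq (x : E3) : zc x = cx 0 x + cx 1 x * Complex.I := by
  apply Complex.ext <;> simp [zc, cx]

lemma zc_zero : zc 0 = 0 := by apply Complex.ext <;> simp [zc]

lemma zc_rot (α : ℝ) (x : E3) : zc (rot3 α x) = Complex.exp (Complex.I * α) * zc x := by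
  rw [mul_comm Complex.I, Complex.exp_mul_I, ← Complex.ofReal_cos, ← Complex.ofReal_sin]
  apply Complex.ext <;> simp [zc, rot3, -Complex.ofReal_cos, -Complex.ofReal_sin] <;> ring

lemma decomp (x : E3) (hx : zc x ≠ 0) :
    x = rot3 (Complex.arg (zc x)) (‖zc x‖ • gam (x 2 / ‖zc x‖)) := by
  have hn : ‖zc x‖ ≠ 0 := norm_ne_zero_iff.2 hx
  have h := Complex.norm_mul_cos_arg (zc x)
  have h' := Complex.norm_mul_sin_arg (zc x)
  ext i; fin_cases i
  · simp [rot3, gam]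
    rw [mul_comm, h]; rfl
  · simp [rot3, gam]
    rw [mul_comm, h']; rfl
  · simp [rot3, gam]
    field_simp

lemma Wt.phase (h : Wt m F e) (hm : m ≠ 0) (he : ∀ x, x ≠ 0 → ContinuousAt e x) :
    ∃ k : ℂ, k ≠ 0 ∧ ∀ x, (k * (F x * (starRingEnd ℂ) (zc x) ^ m)).im = 0 := by
  obtain ⟨k, hk, h1, h2⟩ := exists_kappa _ _ (h.wronsk hm 0)
  have hec : Continuous fun y => e (gam y) :=
    continuous_iff_continuousAt.2 fun y =>
      ContinuousAt.comp (f := gam) (he _ (gam_ne y)) gam_cont.continuousAt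
  have hz : ∀ y, (k * F (gam y)).im = 0 := by
    refine ode_zero (fun y => (m ^ 2 - e (gam y)) / (1 + y ^ 2)) (fun y => -y / (1 + y ^ 2))
      (fun y => (k * F (gam y)).im) (fun y => (k * pd 2 F (gam y)).im) ?_ ?_ ?_ ?_ h1 h2
    · refine Continuous.div (continuous_const.sub hec) (by fun_prop) fun y => by positivity
    · refine Continuous.div (by fun_prop) (by fun_prop) fun y => by positivity
    · intro y
      exact Complex.imCLM.hasFDerivAt.comp_hasDerivAt y ((gam_deriv h.sm y).const_mul k)
    · intro y
      have := Complex.imCLM.hasFDerivAt.comp_hasDerivAt y ((gam_deriv (h.sm.pd 2) y).const_mul k)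
      refine this.congr_deriv ?_
      have o := h.ode y
      have p : (1 + y ^ 2 : ℝ) ≠ 0 := by positivity
      have o2 : ((1 + y ^ 2 : ℝ) : ℂ) * (k * pd 2 (pd 2 F) (gam y))
         + (y : ℂ) * (k * pd 2 F (gam y)) =
         (((m : ℝ) ^ 2 - e (gam y) : ℝ) : ℂ) * (k * F (gam y)) := by
        push_cast
        linear_combination k * o
      have o3 := congrArg Complex.im o2
      rw [Complex.add_im, Complex.im_ofReal_mul, Complex.im_ofReal_mul, Complex.im_ofReal_mul] at o3
      simp only [Complex.imCLM_apply]
      field_simp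
      linear_combination o3
  refine ⟨k, hk, fun x => ?_⟩
  by_cases hx : zc x = 0
  · simp [hx, hm]
  · have hn : 0 < ‖zc x‖ := norm_pos_iff.2 hx
    have hg := gam_ne (x 2 / ‖zc x‖)
    have e1 : F x = Complex.exp (m * Complex.I * Complex.arg (zc x)) *
        F (gam (x 2 / ‖zc x‖)) := by
      conv_lhs => rw [decomp x hx]
      rw [h.eqv _ _ (smul_ne_zero hn.ne' hg), h.hom _ _ hn hg]
    have e2 : (starRingEnd ℂ) (zc x) = ‖zc x‖ * Complex.exp (-(Complex.I * Complex.arg (zc x))) := by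
      conv_lhs => rw [← Complex.norm_mul_exp_arg_mul_I (zc x)]
      rw [map_mul, Complex.conj_ofReal, ← Complex.exp_conj]
      simp [mul_comm]
    have e3 : k * (F x * (starRingEnd ℂ) (zc x) ^ m) =
        ((‖zc x‖ ^ m : ℝ) : ℂ) * (k * F (gam (x 2 / ‖zc x‖))) := by
      rw [e1, e2, mul_pow, ← Complex.exp_nat_mul]
      have : Complex.exp (m * Complex.I * Complex.arg (zc x)) *
        Complex.exp (m * -(Complex.I * Complex.arg (zc x))) = 1 := by
        rw [← Complex.exp_add, ← Complex.exp_zero]; congr 1; ring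
      push_cast
      linear_combination k * F (gam (x 2 / ‖zc x‖)) * (‖zc x‖ : ℂ) ^ m * this
    rw [e3, Complex.im_ofReal_mul, hz, mul_zero]

end

section
lemma glue_d1 (x : ℝ) : HasDerivAt expNegInvGlue (x⁻¹ ^ 2 * expNegInvGlue x) x := by
  have := expNegInvGlue.hasDerivAt_polynomial_eval_inv_mul 1 x
  simpa using this

lemma glue_d2 (x : ℝ) : HasDerivAt (fun x => x⁻¹ ^ 2 * expNegInvGlue x)
    ((x⁻¹ ^ 4 - 2 * x⁻¹ ^ 3) * expNegInvGlue x) x := by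
  have := expNegInvGlue.hasDerivAt_polynomial_eval_inv_mul (Polynomial.X ^ 2) x
  simp at this
  convert this using 1
  · ext; simp
  · ring

lemma exists_bump : ∃ (P P1 P2 : ℝ → ℝ) (a b : ℝ), 0 < a ∧ (∀ q, q < a → P q = 0) ∧
    (∀ q, b < q → P q = 0) ∧ (∀ q, 0 < q → HasDerivAt P (P1 q) q) ∧
    (∀ q, 0 < q → HasDerivAt P1 (P2 q) q) ∧ (∀ q, 0 < q → ContDiffAt ℝ ∞ P q) ∧
    (∀ q, 0 ≤ P q) ∧ 0 < P 1 ∧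
    (∀ q, 0 < q → 0 ≤ P q + 6 * q * P1 q + 4 * q ^ 2 * P2 q) := by
  let X : ℝ → ℝ := fun q => 1 - (Real.log q) ^ 2 / 10000
  let X1 : ℝ → ℝ := fun q => - (2 * Real.log q * q⁻¹) / 10000
  let X2 : ℝ → ℝ := fun q => - (2 * q⁻¹ * q⁻¹ + 2 * Real.log q * (-(q ^ 2)⁻¹)) / 10000
  let P : ℝ → ℝ := fun q => if 0 < q then expNegInvGlue (X q) else 0
  let P1 : ℝ → ℝ := fun q => (X q)⁻¹ ^ 2 * expNegInvGlue (X q) * X1 q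
  let P2 : ℝ → ℝ := fun q => ((X q)⁻¹ ^ 4 - 2 * (X q)⁻¹ ^ 3) * expNegInvGlue (X q) * X1 q * X1 q +
    (X q)⁻¹ ^ 2 * expNegInvGlue (X q) * X2 q
  have hP : ∀ q, 0 < q → P =ᶠ[𝓝 q] fun q => expNegInvGlue (X q) := by
    intro q hq
    filter_upwards [lt_mem_nhds hq] with y hy
    simp [P, hy]
  have hX : ∀ q, 0 < q → HasDerivAt X (X1 q) q := by
    intro q hq
    have := ((((Real.hasDerivAt_log hq.ne').pow 2).div_const 10000).const_sub 1)
    refine this.congr_deriv ?_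
    simp [X1]; ring
  have hX1 : ∀ q, 0 < q → HasDerivAt X1 (X2 q) q := by
    intro q hq
    have := ((((Real.hasDerivAt_log hq.ne').const_mul 2).mul (hasDerivAt_inv hq.ne')).neg).div_const 10000
    exact this
  refine ⟨P, P1, P2, Real.exp (-100), Real.exp 100, Real.exp_pos _, ?_, ?_, ?_, ?_, ?_, ?_, ?_, ?_⟩
  · intro q hq
    by_cases h : 0 < q
    · simp only [P, h, if_true]
      apply expNegInvGlue.zero_of_nonpos
      have : Real.log q < -100 := (Real.log_lt_iff_lt_exp h).2 hq
      simp only [X]; nlinarith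
    · simp [P, h]
  · intro q hq
    have h : 0 < q := (Real.exp_pos _).trans hq
    simp only [P, h, if_true]
    apply expNegInvGlue.zero_of_nonpos
    have : 100 < Real.log q := (Real.lt_log_iff_exp_lt h).2 hq
    simp only [X]; nlinarith
  · intro q hq
    exact ((glue_d1 (X q)).comp q (hX q hq)).congr_of_eventuallyEq (hP q hq)
  · intro q hq
    have := ((glue_d2 (X q)).comp q (hX q hq)).mul (hX1 q hq)
    exact this
  · intro q hq
    refine ContDiffAt.congr_of_eventuallyEq ?_ (hP q hq)
    refine expNegInvGlue.contDiff.contDiffAt.comp q ?_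
    exact contDiffAt_const.sub (((Real.contDiffAt_log.2 hq.ne').pow 2).div_const _)
  · intro q
    simp only [P]; split_ifs
    · exact expNegInvGlue.nonneg _
    · exact le_rfl
  · simp [P, X]
    exact expNegInvGlue.pos_of_pos one_pos
  · intro q hq
    have e0 : P q = expNegInvGlue (X q) := by simp [P, hq]
    rw [e0]
    by_cases hx : X q ≤ 0
    · simp [P1, P2, expNegInvGlue.zero_of_nonpos hx]
    · push Not at hx
      set s := Real.log q with hs
      have hXs : X q = 1 - s ^ 2 / 10000 := rfl
      have e1 : P q + 6 * q * P1 q + 4 * q ^ 2 * P2 q = expNegInvGlue (X q) / X q ^ 4 *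
        (X q ^ 4 - X q ^ 2 * (4 * s + 8) / 10000 + 16 * (1 - 2 * X q) * (s ^ 2 / 10000) / 10000) := by
        rw [e0]
        simp only [P1, P2, X1, X2, ← hs]
        field_simp
        ring
      rw [← e0, e1]
      have hg := expNegInvGlue.nonneg (X q)
      refine mul_nonneg (by positivity) ?_
      rw [show s ^ 2 / 10000 = 1 - X q by rw [hXs]; ring]
      have s1 : s ≤ 100 := by
        rw [hXs] at hx; nlinarith
      have x1 : X q ≤ 1 := by rw [hXs]; nlinarith [sq_nonneg s]
      generalize X q = u at *
      have : u ^ 2 * (4 * s + 8) ≤ u ^ 2 * 408 := by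
        apply mul_le_mul_of_nonneg_left _ (sq_nonneg u); linarith
      nlinarith [sq_nonneg (u ^ 2 - 1/25), sq_nonneg (u - 1/5)]

end

section
variable {m : ℕ} {F : E3 → ℂ} {e : E3 → ℝ}

lemma pd2_mul {A B : E3 → ℂ} (hA : SmoothOff A) (hB : SmoothOff B) {x : E3} (hx : x ≠ 0)
    (i : Fin 3) : pd i (pd i (fun y => A y * B y)) x =
      pd i (pd i A) x * B x + 2 * (pd i A x * pd i B x) + A x * pd i (pd i B) x := by
  have h1 := pd_congr_off (F := pd i (fun y => A y * B y))
    (G := fun y => pd i A y * B y + A y * pd i B y) i hx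
    (fun y hy => pd_mul i (hA.diff hy) (hB.diff hy))
  rw [h1, pd_add i (((hA.pd i).mul hB).diff hx) ((hA.mul (hB.pd i)).diff hx),
    pd_mul i ((hA.pd i).diff hx) (hB.diff hx), pd_mul i (hA.diff hx) ((hB.pd i).diff hx)]
  ring

/-- squared norm -/
def nq (x : E3) : ℝ := x 0 ^ 2 + x 1 ^ 2 + x 2 ^ 2

lemma nq_norm (x : E3) : nq x = ‖x‖ ^ 2 := by
  rw [EuclideanSpace.norm_sq_eq]; simp [nq, Fin.sum_univ_three]

lemma nq_pos {x : E3} (hx : x ≠ 0) : 0 < nq x := by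
  rw [nq_norm]; exact pow_pos (norm_pos_iff.2 hx) 2

lemma nq_contDiff : ContDiff ℝ ∞ nq := by
  have : nq = fun x => ‖x‖ ^ 2 := funext nq_norm
  rw [this]; exact contDiff_norm_sq ℝ

/-- radial function -/
def rad (P : ℝ → ℝ) (x : E3) : ℂ := ((P (nq x) : ℝ) : ℂ)

lemma rad_fderiv {P : ℝ → ℝ} {p : ℝ} {x : E3} (h : HasDerivAt P p (nq x)) :
    HasFDerivAt (rad P) (Complex.ofRealCLM.comp (p • fderiv ℝ nq x)) x := by
  have h1 : HasFDerivAt nq (fderiv ℝ nq x) x :=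
    (nq_contDiff.contDiffAt.differentiableAt (by simp)).hasFDerivAt
  exact Complex.ofRealCLM.hasFDerivAt.comp x (h.comp_hasFDerivAt x h1)

lemma fderiv_nq (i : Fin 3) (x : E3) :
    fderiv ℝ nq x (EuclideanSpace.single i (1 : ℝ)) = 2 * x i := by
  have : nq = fun x => ‖x‖ ^ 2 := funext nq_norm
  rw [this, fderiv_norm_sq_apply]
  simp [EuclideanSpace.inner_single_right]

lemma pd_rad {P : ℝ → ℝ} {p : ℝ} {x : E3} (h : HasDerivAt P p (nq x)) (i : Fin 3) :
    pd i (rad P) x = 2 * cx i x * p := by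
  unfold pd
  rw [(rad_fderiv h).fderiv]
  simp [fderiv_nq, cx]; ring

lemma rad_off {P : ℝ → ℝ} (h : ∀ q, 0 < q → ContDiffAt ℝ ∞ P q) : SmoothOff (rad P) := by
  intro x hx
  exact Complex.ofRealCLM.contDiff.contDiffAt.comp x
    ((h _ (nq_pos hx)).comp x nq_contDiff.contDiffAt)

lemma pd2_rad {P P1 P2 : ℝ → ℝ} (h1 : ∀ q, 0 < q → HasDerivAt P (P1 q) q)
    (h2 : ∀ q, 0 < q → HasDerivAt P1 (P2 q) q) {x : E3} (hx : x ≠ 0) (i : Fin 3) :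
    pd i (pd i (rad P)) x = 2 * P1 (nq x) + 4 * cx i x ^ 2 * P2 (nq x) := by
  have a := pd_congr_off (F := pd i (rad P)) (G := fun y => 2 * (cx i y * rad P1 y)) i hx
    (fun y hy => by rw [pd_rad (h1 _ (nq_pos hy))]; simp [rad]; ring)
  have d1 := (cx_off i).diff hx
  have d2 := (rad_fderiv (h2 _ (nq_pos hx))).differentiableAt
  rw [a, pd_const_mul _ _ (d1.fun_mul d2), pd_mul i d1 d2, pd_rad (h2 _ (nq_pos hx)), pd_cx]
  simp [rad]; ring

/-- conjugate horizontal coordinate -/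
def zb (x : E3) : ℂ := cx 0 x - Complex.I * cx 1 x

lemma zb_eq (x : E3) : zb x = (starRingEnd ℂ) (zc x) := by
  apply Complex.ext <;> simp [zb, zc, cx]

lemma zb_contDiff : ContDiff ℝ ∞ zb :=
  (cx_contDiff 0).sub (contDiff_const.mul (cx_contDiff 1))

lemma zb_off : SmoothOff zb := fun _ _ => zb_contDiff.contDiffAt

/-- derivative of the conjugate coordinate -/
def zbd (i : Fin 3) : ℂ := (if i = 0 then 1 else 0) - Complex.I * (if i = 1 then 1 else 0)

lemma pd_zb (i : Fin 3) (x : E3) : pd i zb x = zbd i := by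
  have d := fun j => ((cx_contDiff j).contDiffAt (x := x)).differentiableAt (by simp)
  unfold zb
  rw [pd_sub i (d 0) ((d 1).const_mul _), pd_const_mul _ i (d 1), pd_cx, pd_cx]
  rfl

lemma pd2_zb (i : Fin 3) (x : E3) : pd i (pd i zb) x = 0 := by
  have : pd i zb = fun _ => zbd i := funext (pd_zb i)
  rw [this]; simp [pd]

/-- cutoff weights in the horizontal directions -/
def hw (i : Fin 3) : ℂ := if i = 2 then 0 else 1

/-- The test function. -/
def Yf (P : ℝ → ℝ) (F : E3 → ℂ) (y : E3) : ℂ := rad P y * zb y * F y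

/-- Auxiliary function. -/
def Nf (P : ℝ → ℝ) (F : E3 → ℂ) (y : E3) : ℂ := rad P y * F y

/-- The vector field whose divergence is removed. -/
def Vf (P : ℝ → ℝ) (F : E3 → ℂ) (i : Fin 3) (y : E3) : ℂ :=
  (starRingEnd ℂ) (Yf P F y) * pd i (Yf P F) y -
    hw i * (cx i y * (Nf P F y * (starRingEnd ℂ) (Nf P F y)))

lemma alg_id (f f0 f1 f2 f00 f11 f22 : ℂ) (x0 x1 x2 p p1 p2 e : ℝ)
    (hE : (x0 : ℂ) * f0 + x1 * f1 + x2 * f2 = 0)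
    (hR : (x0 : ℂ) * f1 - x1 * f0 = 2 * Complex.I * f)
    (hL : f00 + f11 + f22 = -(e : ℂ) * f)
    (Y Y0 Y1 Y2 Y00 Y11 Y22 N N0 N1 z g0 g1 g2 g00 g11 g22 V0 V1 V2 : ℂ)
    (hz : z = x0 - Complex.I * x1)
    (hg0 : g0 = 2 * x0 * p1 * z + p) (hg1 : g1 = 2 * x1 * p1 * z - p * Complex.I)
    (hg2 : g2 = 2 * x2 * p1 * z)
    (hg00 : g00 = (2 * p1 + 4 * x0 ^ 2 * p2) * z + 4 * x0 * p1)
    (hg11 : g11 = (2 * p1 + 4 * x1 ^ 2 * p2) * z - 4 * x1 * p1 * Complex.I)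
    (hg22 : g22 = (2 * p1 + 4 * x2 ^ 2 * p2) * z)
    (hY : Y = p * z * f)
    (hY00 : Y00 = g00 * f + 2 * (g0 * f0) + p * z * f00)
    (hY11 : Y11 = g11 * f + 2 * (g1 * f1) + p * z * f11)
    (hY22 : Y22 = g22 * f + 2 * (g2 * f2) + p * z * f22)
    (hN : N = p * f) (hN0 : N0 = 2 * x0 * p1 * f + p * f0) (hN1 : N1 = 2 * x1 * p1 * f + p * f1)
    (hV0 : V0 = (starRingEnd ℂ) Y0 * Y0 + (starRingEnd ℂ) Y * Y00 -
      (N * (starRingEnd ℂ) N + x0 * (N0 * (starRingEnd ℂ) N + N * (starRingEnd ℂ) N0)))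
    (hV1 : V1 = (starRingEnd ℂ) Y1 * Y1 + (starRingEnd ℂ) Y * Y11 -
      (N * (starRingEnd ℂ) N + x1 * (N1 * (starRingEnd ℂ) N + N * (starRingEnd ℂ) N1)))
    (hV2 : V2 = (starRingEnd ℂ) Y2 * Y2 + (starRingEnd ℂ) Y * Y22) :
    Complex.normSq Y0 + Complex.normSq Y1 + Complex.normSq Y2 - e * Complex.normSq Y =
      (V0 + V1 + V2).re - Complex.normSq f * p *
        (2 * p + (x0 ^ 2 + x1 ^ 2) * (6 * p1 + 4 * (x0 ^ 2 + x1 ^ 2 + x2 ^ 2) * p2)) := by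
  have I2 : Complex.I * Complex.I = -1 := Complex.I_mul_I
  set E0 : ℂ := x0 * f0 + x1 * f1 with hE0
  have ns : ∀ w : ℂ, (Complex.normSq w : ℂ) = w * (starRingEnd ℂ) w := fun w =>
    (Complex.mul_conj w).symm
  have key : (((Complex.normSq Y0 + Complex.normSq Y1 + Complex.normSq Y2 - e * Complex.normSq Y
      + Complex.normSq f * p *
        (2 * p + (x0 ^ 2 + x1 ^ 2) * (6 * p1 + 4 * (x0 ^ 2 + x1 ^ 2 + x2 ^ 2) * p2)) : ℝ)) : ℂ) =
      (V0 + V1 + V2) - p ^ 2 * ((starRingEnd ℂ) f * E0 - f * (starRingEnd ℂ) E0) := by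
    push_cast
    simp only [ns]
    rw [hV0, hV1, hV2, hY00, hY11, hY22, hY, hN, hN0, hN1, hg0, hg1, hg2, hg00, hg11, hg22, hz, hE0]
    simp only [map_mul, map_add, map_sub, Complex.conj_ofReal, Complex.conj_I, map_ofNat]
    rw [hE0] at hE
    set fb := (starRingEnd ℂ) f
    set fb0 := (starRingEnd ℂ) f0
    set fb1 := (starRingEnd ℂ) f1
    linear_combination (norm := (ring_nf; simp only [Complex.I_sq]; ring))
      -(p * (x0 + Complex.I * x1) * fb * p * (x0 - Complex.I * x1)) * hL
      - (p * (x0 + Complex.I * x1) * fb * 4 * p1 * (x0 - Complex.I * x1)) * hE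
      + 2 * p ^ 2 * fb * Complex.I * hR
  have im0 : ((p : ℂ) ^ 2 * ((starRingEnd ℂ) f * E0 - f * (starRingEnd ℂ) E0)).re = 0 := by
    rw [← Complex.ofReal_pow, Complex.re_ofReal_mul]
    simp [Complex.mul_re]
  have := congrArg Complex.re key
  rw [Complex.ofReal_re, Complex.sub_re, im0] at this
  linarith

end

section
variable {m : ℕ} {F : E3 → ℂ} {e : E3 → ℝ}

lemma pointwise_id {P P1 P2 : ℝ → ℝ} (hF : Wt 2 F e) (h1 : ∀ q, 0 < q → HasDerivAt P (P1 q) q)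
    (h2 : ∀ q, 0 < q → HasDerivAt P1 (P2 q) q) (hP : ∀ q, 0 < q → ContDiffAt ℝ ∞ P q)
    {x : E3} (hx : x ≠ 0) :
    Complex.normSq (pd 0 (Yf P F) x) + Complex.normSq (pd 1 (Yf P F) x)
      + Complex.normSq (pd 2 (Yf P F) x) - e x * Complex.normSq (Yf P F x) =
    (pd 0 (Vf P F 0) x + pd 1 (Vf P F 1) x + pd 2 (Vf P F 2) x).re -
      Complex.normSq (F x) * P (nq x) * (2 * P (nq x) + (x 0 ^ 2 + x 1 ^ 2) *
        (6 * P1 (nq x) + 4 * nq x * P2 (nq x))) := by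
  have hr := rad_off hP
  have hrz := hr.mul zb_off
  have hY : SmoothOff (Yf P F) := hrz.mul hF.sm
  have hN : SmoothOff (Nf P F) := hr.mul hF.sm
  have q0 := nq_pos hx
  have hro := hF.rotd hx
  have g1 : ∀ i, pd i (fun y => rad P y * zb y) x =
      2 * cx i x * P1 (nq x) * zb x + P (nq x) * zbd i := by
    intro i
    rw [pd_mul i (hr.diff hx) (zb_off.diff hx), pd_zb, pd_rad (h1 _ q0)]; rfl
  have g2 : ∀ i, pd i (pd i (fun y => rad P y * zb y)) x =
      (2 * P1 (nq x) + 4 * cx i x ^ 2 * P2 (nq x)) * zb x + 4 * cx i x * P1 (nq x) * zbd i := by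
    intro i
    rw [pd2_mul hr zb_off hx, pd_zb, pd2_zb, pd_rad (h1 _ q0), pd2_rad h1 h2 hx]
    ring
  have y2 : ∀ i, pd i (pd i (Yf P F)) x = pd i (pd i (fun y => rad P y * zb y)) x * F x
      + 2 * (pd i (fun y => rad P y * zb y) x * pd i F x)
      + P (nq x) * zb x * pd i (pd i F) x := by
    intro i
    exact pd2_mul hrz hF.sm hx i
  have n1 : ∀ i, pd i (Nf P F) x = 2 * cx i x * P1 (nq x) * F x + P (nq x) * pd i F x := by
    intro i
    have := pd_mul i (hr.diff hx) (hF.sm.diff hx)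
    rw [pd_rad (h1 _ q0)] at this
    exact this
  have v1 : ∀ i, pd i (Vf P F i) x = (starRingEnd ℂ) (pd i (Yf P F) x) * pd i (Yf P F) x
      + (starRingEnd ℂ) (Yf P F x) * pd i (pd i (Yf P F)) x
      - hw i * (Nf P F x * (starRingEnd ℂ) (Nf P F x) + cx i x * (pd i (Nf P F) x *
        (starRingEnd ℂ) (Nf P F x) + Nf P F x * (starRingEnd ℂ) (pd i (Nf P F) x))) := by
    intro i
    have a := hY.conj.mul (hY.pd i)
    have b := hN.mul hN.conj
    have c := (cx_off i).mul b
    unfold Vf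
    rw [pd_sub i (a.diff hx) ((c.diff hx).const_mul _), pd_const_mul _ i (c.diff hx),
      pd_mul i (hY.conj.diff hx) ((hY.pd i).diff hx), pd_mul i ((cx_off i).diff hx) (b.diff hx),
      pd_mul i (hN.diff hx) (hN.conj.diff hx), pd_conj, pd_conj, pd_cx]
    simp
  have z0 : zbd 0 = 1 := by simp [zbd]
  have z1 : zbd 1 = -Complex.I := by simp [zbd]
  have z2 : zbd 2 = 0 := by simp [zbd]
  have w0 : hw 0 = 1 := by simp [hw]
  have w1 : hw 1 = 1 := by simp [hw]
  have w2 : hw 2 = 0 := by simp [hw]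
  refine alg_id (F x) (pd 0 F x) (pd 1 F x) (pd 2 F x) (pd 0 (pd 0 F) x) (pd 1 (pd 1 F) x)
    (pd 2 (pd 2 F) x) (x 0) (x 1) (x 2) (P (nq x)) (P1 (nq x)) (P2 (nq x)) (e x)
    (hF.euler hx) (by exact_mod_cast hro) (hF.lapl x hx) (Yf P F x) (pd 0 (Yf P F) x)
    (pd 1 (Yf P F) x) (pd 2 (Yf P F) x) (pd 0 (pd 0 (Yf P F)) x) (pd 1 (pd 1 (Yf P F)) x)
    (pd 2 (pd 2 (Yf P F)) x) (Nf P F x) (pd 0 (Nf P F) x) (pd 1 (Nf P F) x) (zb x) _ _ _ _ _ _ _ _ _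
    rfl ((g1 0).trans ?_) ((g1 1).trans ?_) ((g1 2).trans ?_) ((g2 0).trans ?_) ((g2 1).trans ?_)
    ((g2 2).trans ?_) rfl (y2 0) (y2 1) (y2 2) rfl (n1 0) (n1 1)
    ((v1 0).trans ?_) ((v1 1).trans ?_) ((v1 2).trans ?_)
  · rw [z0]; simp only [cx]; ring
  · rw [z1]; simp only [cx]; ring
  · rw [z2]; simp only [cx]; ring
  · rw [z0]; simp only [cx]; ring
  · rw [z1]; simp only [cx]; ring
  · rw [z2]; simp only [cx]; ring
  · rw [w0]; simp only [cx]; ring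
  · rw [w1]; simp only [cx]; ring
  · rw [w2]; ring

lemma integral_pd_zero {V : E3 → ℂ} (hV : ContDiff ℝ ∞ V) (hc : HasCompactSupport V) (i : Fin 3) :
    Integrable (pd i V) ∧ ∫ x, pd i V x = 0 := by
  have hd : Differentiable ℝ V := hV.differentiable (by simp)
  have hcont : Continuous (pd i V) :=
    (hV.continuous_fderiv (by simp)).clm_apply continuous_const
  have hcs : HasCompactSupport (pd i V) := by
    refine (hc.fderiv (𝕜 := ℝ)).mono' ?_
    intro x hx
    refine subset_tsupport _ ?_
    intro h0
    apply hx
    simp [pd, h0]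
  have hi := hcont.integrable_of_hasCompactSupport hcs (μ := volume)
  refine ⟨hi, ?_⟩
  have hVi : Integrable V := hV.continuous.integrable_of_hasCompactSupport hc
  have key := integral_mul_fderiv_eq_neg_fderiv_mul_of_integrable (μ := (volume : Measure E3))
    (f := fun _ : E3 => (1 : ℂ)) (g := V) (v := EuclideanSpace.single i (1 : ℝ))
    (by simp) (by simp only [one_mul]; exact hi) (by simpa using hVi)
    (fun x _ => differentiableAt_const _) (fun x _ => hd x)
  simpa [pd] using key

end

section
variable {m : ℕ} {F : E3 → ℂ} {e : E3 → ℝ}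

/-- Smooth off the origin and supported in a shell. -/
structure Shell (a b : ℝ) (V : E3 → ℂ) : Prop where
  sm : SmoothOff V
  lo : ∀ x, nq x < a → V x = 0
  hi : ∀ x, b < nq x → V x = 0

lemma nq_near {a : ℝ} (ha : 0 < a) : ∀ᶠ y in 𝓝 (0 : E3), nq y < a := by
  have : ContinuousAt nq 0 := nq_contDiff.continuous.continuousAt
  refine this.eventually_lt continuousAt_const ?_
  simpa [nq] using ha

lemma near_of_lt {a : ℝ} {x : E3} (hx : nq x < a) : ∀ᶠ y in 𝓝 x, nq y < a :=
  (nq_contDiff.continuous.continuousAt).eventually_lt continuousAt_const hx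

lemma near_of_gt {b : ℝ} {x : E3} (hx : b < nq x) : ∀ᶠ y in 𝓝 x, b < nq y :=
  continuousAt_const.eventually_lt (nq_contDiff.continuous.continuousAt) hx

lemma compact_of_hi {β : Type*} [Zero β] {b : ℝ} {V : E3 → β} (h : ∀ x, b < nq x → V x = 0) :
    HasCompactSupport V := by
  refine HasCompactSupport.intro (isCompact_closedBall (0 : E3) (|b| + 1)) ?_
  intro x hx
  apply h
  rw [mem_closedBall_zero_iff, not_le] at hx
  rw [nq_norm]
  nlinarith [le_abs_self b, abs_nonneg b]

lemma Shell.contDiff {a b : ℝ} {V : E3 → ℂ} (h : Shell a b V) (ha : 0 < a) : ContDiff ℝ ∞ V := by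
  rw [contDiff_iff_contDiffAt]
  intro x
  by_cases hx : x = 0
  · subst hx
    refine (contDiffAt_const (c := (0 : ℂ))).congr_of_eventuallyEq ?_
    filter_upwards [nq_near ha] with y hy using h.lo y hy
  · exact h.sm x hx

lemma Shell.pd {a b : ℝ} {V : E3 → ℂ} (h : Shell a b V) (i : Fin 3) : Shell a b (pd i V) where
  sm := h.sm.pd i
  lo := by
    intro x hx
    rw [pd_congr (G := fun _ => 0) i]
    · simp [_root_.pd]
    · filter_upwards [near_of_lt hx] with y hy using h.lo y hy
  hi := by
    intro x hx
    rw [pd_congr (G := fun _ => 0) i]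
    · simp [_root_.pd]
    · filter_upwards [near_of_gt hx] with y hy using h.hi y hy

lemma Shell.mul_right {a b : ℝ} {V W : E3 → ℂ} (h : Shell a b V) (hW : SmoothOff W) :
    Shell a b (fun y => V y * W y) where
  sm := h.sm.mul hW
  lo := fun x hx => by simp [h.lo x hx]
  hi := fun x hx => by simp [h.hi x hx]

lemma Shell.sub {a b : ℝ} {V W : E3 → ℂ} (h : Shell a b V) (h' : Shell a b W) :
    Shell a b (fun y => V y - W y) where
  sm := fun x hx => (h.sm x hx).sub (h'.sm x hx)
  lo := fun x hx => by simp [h.lo x hx, h'.lo x hx]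
  hi := fun x hx => by simp [h.hi x hx, h'.hi x hx]

lemma off_const (c : ℂ) : SmoothOff (fun _ => c) := fun _ _ => contDiffAt_const

lemma shell_rad {P : ℝ → ℝ} {a b : ℝ} (l : ∀ q, q < a → P q = 0) (u : ∀ q, b < q → P q = 0)
    (hP : ∀ q, 0 < q → ContDiffAt ℝ ∞ P q) : Shell a b (rad P) where
  sm := rad_off hP
  lo := fun x hx => by simp [rad, l _ hx]
  hi := fun x hx => by simp [rad, u _ hx]

lemma shell_Y {P : ℝ → ℝ} {a b : ℝ} (h : Shell a b (rad P)) (hF : SmoothOff F) :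
    Shell a b (Yf P F) := (h.mul_right zb_off).mul_right hF

lemma shell_N {P : ℝ → ℝ} {a b : ℝ} (h : Shell a b (rad P)) (hF : SmoothOff F) :
    Shell a b (Nf P F) := h.mul_right hF

lemma shell_V {P : ℝ → ℝ} {a b : ℝ} (h : Shell a b (rad P)) (hF : SmoothOff F) (i : Fin 3) :
    Shell a b (Vf P F i) := by
  have hY := shell_Y h hF
  have hN := shell_N h hF
  have h1 := (hY.pd i).mul_right hY.sm.conj
  have h2 := hN.mul_right ((hN.sm.conj.mul (cx_off i)).mul (off_const (hw i)))
  have h3 := h1.sub h2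
  have : Vf P F i = fun y => pd i (Yf P F) y * (starRingEnd ℂ) (Yf P F y) -
      Nf P F y * ((starRingEnd ℂ) (Nf P F y) * cx i y * hw i) := by
    funext y; unfold Vf; ring
  rw [this]; exact h3

lemma neg_integral {P P1 P2 : ℝ → ℝ} {a b : ℝ} (hF : Wt 2 F e)
    (he : ∀ x, x ≠ 0 → ContinuousAt e x) (ha : 0 < a)
    (l : ∀ q, q < a → P q = 0) (u : ∀ q, b < q → P q = 0)
    (h1 : ∀ q, 0 < q → HasDerivAt P (P1 q) q)
    (h2 : ∀ q, 0 < q → HasDerivAt P1 (P2 q) q) (hP : ∀ q, 0 < q → ContDiffAt ℝ ∞ P q)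
    (h0 : ∀ q, 0 ≤ P q) (hp1 : 0 < P 1)
    (hi : ∀ q, 0 < q → 0 ≤ P q + 6 * q * P1 q + 4 * q ^ 2 * P2 q)
    {x₀ : E3} (hx₀ : nq x₀ = 1) (hF₀ : F x₀ ≠ 0) :
    ∫ x, (Complex.normSq (pd 0 (Yf P F) x) + Complex.normSq (pd 1 (Yf P F) x)
      + Complex.normSq (pd 2 (Yf P F) x) - e x * Complex.normSq (Yf P F x)) < 0 := by
  have hr := shell_rad l u hP
  have hY := shell_Y hr hF.sm
  have hN := shell_N hr hF.sm
  have hV := shell_V hr hF.sm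
  have hVi := fun i => integral_pd_zero ((hV i).contDiff ha) (compact_of_hi (hV i).hi) i
  have cN : Continuous (fun x => Complex.normSq (Nf P F x)) :=
    Complex.continuous_normSq.comp (hN.contDiff ha).continuous
  have sN : HasCompactSupport (fun x => Complex.normSq (Nf P F x)) :=
    compact_of_hi (b := b) (fun x hx => by simp [hN.hi x hx])
  have pN : 0 < ∫ x, Complex.normSq (Nf P F x) := by
    refine cN.integral_pos_of_hasCompactSupport_nonneg_nonzero sN
      (fun x => Complex.normSq_nonneg _) (x := x₀) ?_
    simp [Nf, rad, hx₀, hF₀, hp1.ne']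
  have iN := cN.integrable_of_hasCompactSupport sN (μ := volume)
  have cd : ∀ i, Continuous (fun x => Complex.normSq (pd i (Yf P F) x)) := fun i =>
    Complex.continuous_normSq.comp ((hY.pd i).contDiff ha).continuous
  have ce : Continuous (fun x => e x * Complex.normSq (Yf P F x)) := by
    rw [continuous_iff_continuousAt]
    intro x
    by_cases hx : x = 0
    · subst hx
      refine (continuousAt_const (y := (0 : ℝ))).congr ?_
      filter_upwards [nq_near ha] with y hy
      simp [hY.lo y hy]
    · exact (he x hx).mul
        (Complex.continuous_normSq.comp (hY.contDiff ha).continuous).continuousAt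
  have iI : Integrable (fun x => Complex.normSq (pd 0 (Yf P F) x)
      + Complex.normSq (pd 1 (Yf P F) x)
      + Complex.normSq (pd 2 (Yf P F) x) - e x * Complex.normSq (Yf P F x)) := by
    refine Continuous.integrable_of_hasCompactSupport ((((cd 0).add (cd 1)).add (cd 2)).sub ce) ?_
    exact compact_of_hi (b := b) (fun x hx => by
      simp [hY.hi x hx, (hY.pd 0).hi x hx, (hY.pd 1).hi x hx, (hY.pd 2).hi x hx])
  have iD : Integrable (fun x => pd 0 (Vf P F 0) x + pd 1 (Vf P F 1) x + pd 2 (Vf P F 2) x) :=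
    ((hVi 0).1.add (hVi 1).1).add (hVi 2).1
  have zD : ∫ x, (pd 0 (Vf P F 0) x + pd 1 (Vf P F 1) x + pd 2 (Vf P F 2) x).re = 0 := by
    have hre : ∫ x, (pd 0 (Vf P F 0) x + pd 1 (Vf P F 1) x + pd 2 (Vf P F 2) x).re =
      (∫ x, (pd 0 (Vf P F 0) x + pd 1 (Vf P F 1) x + pd 2 (Vf P F 2) x)).re :=
      integral_re iD
    have i01 : Integrable (fun x => pd 0 (Vf P F 0) x + pd 1 (Vf P F 1) x) :=
      (hVi 0).1.add (hVi 1).1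
    rw [hre, integral_add i01 (hVi 2).1, integral_add (hVi 0).1 (hVi 1).1, (hVi 0).2, (hVi 1).2, (hVi 2).2]
    simp
  have iDr : Integrable (fun x =>
      (pd 0 (Vf P F 0) x + pd 1 (Vf P F 1) x + pd 2 (Vf P F 2) x).re) := iD.re
  have hne : ∀ᵐ x : E3, x ≠ 0 := by
    rw [ae_iff]; simp
  have hle := integral_mono_ae iI (iDr.sub iN) (by
    filter_upwards [hne] with x hx
    rw [pointwise_id hF h1 h2 hP hx]
    simp only [Pi.sub_apply]
    have q0 := nq_pos hx
    have hh := hi _ q0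
    have p0 := h0 (nq x)
    have hNs : Complex.normSq (Nf P F x) = P (nq x) ^ 2 * Complex.normSq (F x) := by
      rw [Nf, rad, Complex.normSq_mul, Complex.normSq_ofReal]; ring
    rw [hNs]
    have nF := Complex.normSq_nonneg (F x)
    have key : P (nq x) ≤ 2 * P (nq x) + (x 0 ^ 2 + x 1 ^ 2) *
        (6 * P1 (nq x) + 4 * nq x * P2 (nq x)) := by
      have hρ0 : 0 ≤ x 0 ^ 2 + x 1 ^ 2 := by positivity
      have hρ1 : x 0 ^ 2 + x 1 ^ 2 ≤ nq x := by
        have := sq_nonneg (x 2); unfold nq; linarith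
      generalize x 0 ^ 2 + x 1 ^ 2 = r at hρ0 hρ1 ⊢
      generalize nq x = q at *
      have : 0 ≤ q * (P q + r * (6 * P1 q + 4 * q * P2 q)) := by
        have e1 : q * (P q + r * (6 * P1 q + 4 * q * P2 q)) =
          (q - r) * P q + r * (P q + 6 * q * P1 q + 4 * q ^ 2 * P2 q) := by ring
        rw [e1]
        exact add_nonneg (mul_nonneg (by linarith) p0) (mul_nonneg hρ0 hh)
      have := nonneg_of_mul_nonneg_right this q0
      linarith
    have := mul_le_mul_of_nonneg_left key (mul_nonneg nF p0)
    nlinarith)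
  have : ∫ x, ((fun x => (pd 0 (Vf P F 0) x + pd 1 (Vf P F 1) x + pd 2 (Vf P F 2) x).re) -
      (fun x => Complex.normSq (Nf P F x))) x = - ∫ x, Complex.normSq (Nf P F x) := by
    rw [integral_sub' iDr iN, zD]; simp
  rw [this] at hle
  linarith

end

section
variable {m : ℕ} {F : E3 → ℂ} {e : E3 → ℝ}

variable {w : E3 → V5}

lemma rot3_norm (α : ℝ) (x : E3) : ‖rot3 α x‖ = ‖x‖ := by
  rw [EuclideanSpace.norm_eq, EuclideanSpace.norm_eq]
  congr 1
  simp [Fin.sum_univ_three, rot3]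
  nlinarith [Real.sin_sq_add_cos_sq α]

lemma rot3_smul (α c : ℝ) (x : E3) : rot3 α (c • x) = c • rot3 α x := by
  ext i; fin_cases i <;> simp [rot3] <;> ring

lemma homExt_rot (h : EquivariantS w) (α : ℝ) {x : E3} (hx : x ≠ 0) :
    homExt w (rot3 α x) = circAct α (homExt w x) := by
  unfold homExt
  rw [rot3_norm, ← rot3_smul]
  apply h
  have := norm_ne_zero_iff.2 hx
  simp [sphere2, norm_smul, this]

lemma homExt_hom (c : ℝ) (x : E3) (hc : 0 < c) : homExt w (c • x) = homExt w x := by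
  unfold homExt
  rw [norm_smul, smul_smul, Real.norm_of_nonneg hc.le, mul_inv, mul_right_comm,
    inv_mul_cancel₀ hc.ne', one_mul]

lemma homExt_sm (h : IsHarmonicSphere w) {x : E3} (hx : x ≠ 0) : ContDiffAt ℝ ∞ (homExt w) x :=
  (h.2.1).contDiffAt (isOpen_compl_singleton.mem_nhds hx)

lemma pd_clm (L : V5 →L[ℝ] ℂ) {Q : E3 → V5} {x : E3} (h : DifferentiableAt ℝ Q x) (i : Fin 3) :
    pd i (fun y => L (Q y)) x = L (fderiv ℝ Q x (EuclideanSpace.single i (1 : ℝ))) := by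
  unfold pd
  have := (L.hasFDerivAt.comp x h.hasFDerivAt).fderiv
  change fderiv ℝ (L ∘ Q) x _ = _
  rw [this]; rfl

lemma lap_clm (L : V5 →L[ℝ] ℂ) {Q : E3 → V5} (h : ∀ x, x ≠ 0 → ContDiffAt ℝ ∞ Q x)
    {x : E3} (hx : x ≠ 0) :
    pd 0 (pd 0 (fun y => L (Q y))) x + pd 1 (pd 1 (fun y => L (Q y))) x
      + pd 2 (pd 2 (fun y => L (Q y))) x = L (lap Q x) := by
  have k : ∀ i : Fin 3, pd i (pd i (fun y => L (Q y))) x =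
      L (fderiv ℝ (fun y => fderiv ℝ Q y (EuclideanSpace.single i (1 : ℝ))) x
      (EuclideanSpace.single i (1 : ℝ))) := by
    intro i
    rw [pd_congr_off (G := fun y => L (fderiv ℝ Q y (EuclideanSpace.single i (1 : ℝ)))) i hx
      (fun y hy => pd_clm L ((h y hy).differentiableAt (by simp)) i)]
    apply pd_clm
    have h1 : ContDiffAt ℝ ∞ (fderiv ℝ Q) x := (h x hx).fderiv_right (m := ∞) (by simp)
    exact (h1.differentiableAt (by simp)).clm_apply (differentiableAt_const _)
  rw [k, k, k, lap, Fin.sum_univ_three, map_add, map_add]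

/-- Weight one projection. -/
def L1 : V5 →L[ℝ] ℂ := (ContinuousLinearMap.fst ℝ ℂ ℂ).comp (ContinuousLinearMap.snd ℝ ℝ (ℂ × ℂ))

/-- Weight two projection. -/
def L2 : V5 →L[ℝ] ℂ := (ContinuousLinearMap.snd ℝ ℂ ℂ).comp (ContinuousLinearMap.snd ℝ ℝ (ℂ × ℂ))

lemma wt_clm (L : V5 →L[ℝ] ℂ) (hL : ∀ α p, L (circAct α p) = Complex.exp (m * Complex.I * α) * L p)
    (h : IsHarmonicSphere w) (h' : EquivariantS w) :
    Wt m (fun x => L (homExt w x)) (gradSq (homExt w)) where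
  sm := fun x hx => L.contDiff.contDiffAt.comp x (homExt_sm h hx)
  hom := fun c x hc _ => by rw [homExt_hom c x hc]
  eqv := fun α x hx => by rw [homExt_rot h' α hx, hL]
  lapl := fun x hx => by
    rw [lap_clm L (fun y hy => homExt_sm h hy) hx, eq_neg_of_add_eq_zero_left (h.2.2 x hx),
      map_neg, map_smul]
    simp

lemma wt1 (h : IsHarmonicSphere w) (h' : EquivariantS w) :
    Wt 1 (fun x => (homExt w x).2.1) (gradSq (homExt w)) :=
  wt_clm L1 (fun α p => by simp [L1, circAct]) h h'

lemma wt2 (h : IsHarmonicSphere w) (h' : EquivariantS w) :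
    Wt 2 (fun x => (homExt w x).2.2) (gradSq (homExt w)) :=
  wt_clm L2 (fun α p => by simp [L2, circAct]) h h'

lemma nsq_cont : Continuous nsq := by
  unfold nsq
  have := Complex.continuous_normSq
  fun_prop

lemma gradSq_cont (h : IsHarmonicSphere w) (x : E3) (hx : x ≠ 0) :
    ContinuousAt (gradSq (homExt w)) x := by
  have h1 : ContDiffAt ℝ ∞ (fderiv ℝ (homExt w)) x :=
    (homExt_sm h hx).fderiv_right (m := ∞) (by simp)
  unfold gradSq
  refine tendsto_finsetSum _ ?_
  intro i _
  exact nsq_cont.continuousAt.comp (h1.continuousAt.clm_apply continuousAt_const)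

end

section
variable {m : ℕ} {F : E3 → ℂ} {e : E3 → ℝ}


lemma nq_rot (α : ℝ) (x : E3) : nq (rot3 α x) = nq x := by
  rw [nq_norm, nq_norm, rot3_norm]

lemma rot3_ne {α : ℝ} {x : E3} (hx : x ≠ 0) : rot3 α x ≠ 0 := by
  rw [← norm_ne_zero_iff, rot3_norm]; exact norm_ne_zero_iff.2 hx

lemma Y_rot (P : ℝ → ℝ) (hF : Wt 2 F e) (α : ℝ) {x : E3} (hx : x ≠ 0) :
    Yf P F (rot3 α x) = Complex.exp (Complex.I * α) * Yf P F x := by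
  have h1 : (starRingEnd ℂ) (Complex.exp (Complex.I * α)) = Complex.exp (-(Complex.I * α)) := by
    rw [← Complex.exp_conj]; simp
  have h2 : Complex.exp (((2 : ℕ) : ℂ) * Complex.I * α) =
      Complex.exp (Complex.I * α) * Complex.exp (Complex.I * α) := by
    rw [← Complex.exp_add]; congr 1; push_cast; ring
  have h3 : Complex.exp (-(Complex.I * α)) * Complex.exp (Complex.I * α) = 1 := by
    rw [← Complex.exp_add]; simp
  unfold Yf
  rw [hF.eqv α x hx, zb_eq, zb_eq, zc_rot, map_mul, h1, h2, rad, rad, nq_rot]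
  linear_combination (((P (nq x) : ℝ) : ℂ) * (starRingEnd ℂ) (zc x) * F x *
    Complex.exp (Complex.I * α)) * h3

lemma exists_twist {G : E3 → ℂ} (hG : Wt 1 G e) (hF : Wt 2 F e)
    (he : ∀ x, x ≠ 0 → ContinuousAt e x) :
    ∃ κ : ℂ, κ ≠ 0 ∧ ∀ (P : ℝ → ℝ) (x : E3), (G x * (starRingEnd ℂ) (κ * Yf P F x)).re = 0 := by
  obtain ⟨k1, hk1, h1⟩ := hG.phase (by norm_num) he
  obtain ⟨k2, hk2, h2⟩ := hF.phase (by norm_num) he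
  refine ⟨-Complex.I * (starRingEnd ℂ) k1 * k2, by simp [hk1, hk2], ?_⟩
  intro P x
  by_cases hz : zc x = 0
  · simp [Yf, zb_eq, hz]
  have hn : 0 < Complex.normSq (zc x) := Complex.normSq_pos.2 hz
  have a1 := h1 x
  have a2 := h2 x
  have c1 : k1 * (G x * (starRingEnd ℂ) (zc x) ^ 1) =
      (((k1 * (G x * (starRingEnd ℂ) (zc x) ^ 1)).re : ℝ) : ℂ) := by
    apply Complex.ext <;> simp [a1] at *
    linarith
  have c2 : (starRingEnd ℂ) (k2 * (F x * (starRingEnd ℂ) (zc x) ^ 2)) =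
      (((k2 * (F x * (starRingEnd ℂ) (zc x) ^ 2)).re : ℝ) : ℂ) := by
    apply Complex.ext
    · simp only [Complex.conj_re, Complex.ofReal_re]
    · simp only [Complex.conj_im, Complex.ofReal_im, a2, neg_zero]
  have hm : (Complex.normSq (zc x) : ℂ) = (starRingEnd ℂ) (zc x) * zc x :=
    Complex.normSq_eq_conj_mul_self
  have key : (Complex.normSq (zc x) : ℂ) * (G x * (starRingEnd ℂ)
      (-Complex.I * (starRingEnd ℂ) k1 * k2 * Yf P F x)) =
      Complex.I * (((P (nq x)) * ((k1 * (G x * (starRingEnd ℂ) (zc x) ^ 1)).re *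
        (k2 * (F x * (starRingEnd ℂ) (zc x) ^ 2)).re) : ℝ) : ℂ) := by
    push_cast
    rw [← c1, ← c2, hm, Yf, zb_eq, rad]
    simp only [map_mul, map_neg, Complex.conj_I, Complex.conj_conj, Complex.conj_ofReal, map_pow]
    ring
  have := congrArg Complex.re key
  rw [Complex.re_ofReal_mul] at this
  simp only [Complex.mul_re, Complex.I_re, Complex.I_im, Complex.ofReal_im, zero_mul, mul_zero,
    sub_zero] at this ⊢
  rcases mul_eq_zero.1 this with h | h
  · exact absurd h hn.ne'
  · exact h

/-- insertion of the middle component -/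
def J1 : ℂ →L[ℝ] V5 := (ContinuousLinearMap.inr ℝ ℝ (ℂ × ℂ)).comp (ContinuousLinearMap.inl ℝ ℂ ℂ)

lemma J1_apply (z : ℂ) : J1 z = (0, z, 0) := by simp [J1]

theorem main_aux (w : E3 → V5)
    (hw : IsHarmonicSphere w) (hweq : EquivariantS w)
    (h2 : ∃ x ∈ sphere2, (w x).2.2 ≠ 0) :
    ∃ X : E3 → V5, ContDiff ℝ ∞ X ∧ HasCompactSupport X ∧
      (0 : E3) ∉ tsupport X ∧ EquivariantV X ∧ secondVar (homExt w) X < 0 := by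
  obtain ⟨x₀, hx₀, hne⟩ := h2
  obtain ⟨P, P1, P2, a, b, ha, l, u, d1, d2, hP, p0, p1, hi⟩ := exists_bump
  have hG := wt1 hw hweq
  have hF := wt2 hw hweq
  have he := gradSq_cont hw
  obtain ⟨κ, hκ, hor⟩ := exists_twist hG hF he
  set F : E3 → ℂ := fun x => (homExt w x).2.2 with hFdef
  have hn0 : ‖x₀‖ = 1 := by simpa [sphere2] using hx₀
  have hF₀ : F x₀ ≠ 0 := by
    simpa [hFdef, homExt, hn0] using hne
  have hY := shell_Y (shell_rad l u hP) hF.sm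
  have hneg := neg_integral hF he ha l u d1 d2 hP p0 p1 hi (x₀ := x₀)
    (by rw [nq_norm, hn0]; norm_num) hF₀
  have hYc := hY.contDiff ha
  have hYd : Differentiable ℝ (Yf P F) := hYc.differentiable (by simp)
  have hY0 : Yf P F 0 = 0 := hY.lo 0 (by simpa [nq] using ha)
  set X : E3 → V5 := fun x => J1 (κ * Yf P F x) with hX
  have hXc : ContDiff ℝ ∞ X := J1.contDiff.comp (contDiff_const.mul hYc)
  refine ⟨X, hXc, ?_, ?_, ?_, ?_⟩
  · exact compact_of_hi (b := b) (fun x hx => by simp [hX, hY.hi x hx])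
  · rw [notMem_tsupport_iff_eventuallyEq]
    filter_upwards [nq_near ha] with y hy
    simp [hX, hY.lo y hy]
  · intro α x
    by_cases hx : x = 0
    · subst hx
      have : rot3 α 0 = 0 := by rw [← norm_eq_zero, rot3_norm, norm_zero]
      simp [this, hX, hY0, circAct, J1_apply]
    · simp only [hX, J1_apply, circAct, Y_rot P hF α hx]
      simp only [mul_zero]
      congr 2
      ring
  · have ht : tangPart (homExt w) X = X := by
      funext x
      have : vdot (homExt w x) (X x) = 0 := by
        have := hor P x
        simpa only [vdot, hX, J1_apply, mul_zero, map_zero, Complex.zero_re, zero_add, add_zero]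
          using this
      simp [tangPart, this]
    have hg : ∀ x, gradSq X x = Complex.normSq κ * (Complex.normSq (pd 0 (Yf P F) x) +
        Complex.normSq (pd 1 (Yf P F) x) + Complex.normSq (pd 2 (Yf P F) x)) := by
      intro x
      have k : ∀ i : Fin 3, fderiv ℝ X x (EuclideanSpace.single i (1 : ℝ)) =
          J1 (κ * pd i (Yf P F) x) := by
        intro i
        have hd : DifferentiableAt ℝ (fun y => κ * Yf P F y) x := (hYd x).const_mul κ
        have := (J1.hasFDerivAt.comp x hd.hasFDerivAt).fderiv
        rw [← pd_const_mul κ i (hYd x)]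
        change fderiv ℝ (J1 ∘ fun y => κ * Yf P F y) x _ = _
        rw [this]; rfl
      simp only [gradSq, Fin.sum_univ_three, k, J1_apply, nsq, Complex.normSq_mul,
        Complex.normSq_zero]
      ring
    have hs : secondVar (homExt w) X = Complex.normSq κ * ∫ x, (Complex.normSq (pd 0 (Yf P F) x)
        + Complex.normSq (pd 1 (Yf P F) x) + Complex.normSq (pd 2 (Yf P F) x)
        - gradSq (homExt w) x * Complex.normSq (Yf P F x)) := by
      unfold secondVar
      rw [ht, ← integral_const_mul]
      congr 1
      funext x
      rw [hg]
      simp only [hX, J1_apply, nsq, Complex.normSq_mul, Complex.normSq_zero]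
      ring
    rw [hs]
    exact mul_neg_of_pos_of_neg (Complex.normSq_pos.2 hκ) hneg

end

end Helpers

/-- Instability: a nonconstant S¹-equivariant tangent map whose range is not contained
in the unit sphere of ℝ ⊕ ℂ ⊕ {0} (i.e. ω₂ ≢ 0) admits an S¹-equivariant smooth vector
field, compactly supported away from the origin, with negative second variation. -/
theorem statement16 (ω : E3 → V5)
    (hω : IsHarmonicSphere ω) (hωeq : EquivariantS ω)
    (hnc : ∃ x ∈ sphere2, ∃ y ∈ sphere2, ω x ≠ ω y)
    (h2 : ∃ x ∈ sphere2, (ω x).2.2 ≠ 0) :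
    ∃ X : E3 → V5, ContDiff ℝ (⊤ : ℕ∞) X ∧ HasCompactSupport X ∧
      (0 : E3) ∉ tsupport X ∧ EquivariantV X ∧ secondVar (homExt ω) X < 0 := by
  exact main_aux ω hω hωeq h2
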